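/- Soundness and completeness of tableaux for the logic of proofs LP (= JT4): for any constant specification CS for LP, an LP-formula A has an LP^e_CS-tableau proof if and only if A is LP_CS-valid. -/

import Mathlib

namespace JLTab

/-- Justification terms: variables, constants, application, sum,
verifier `!`, negative verifier `?`, weak negative verifier `?̄`. -/
inductive Term : Type
  | var : ℕ → Term
  | const : ℕ → Term
  | app : Term → Term → Term
  | sum : Term → Term → Term
  | bang : Term → Term
  | quest : Term → Term
  | qbar : Term → Term
  deriving DecidableEq

/-- JL-formulas: `A ::= p | ⊥ | ¬A | A → A | t:A`. -/
inductive Fml : Type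
  | prop : ℕ → Fml
  | bot : Fml
  | neg : Fml → Fml
  | imp : Fml → Fml → Fml
  | box : Term → Fml → Fml
  deriving DecidableEq

/-- A justification logic JL is J extended by any combination of jT, jD, j4, jB, j5. -/
structure Logic where
  hasT : Bool
  hasD : Bool
  has4 : Bool
  hasB : Bool
  has5 : Bool

/-- The basic justification logic J. -/
def Logic.J : Logic := ⟨false, false, false, false, false⟩

/-- The logic of proofs LP = JT4. -/
def Logic.LP : Logic := ⟨true, false, true, false, false⟩

/-- The logic JT45. -/
def Logic.JT45 : Logic := ⟨true, false, true, false, true⟩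

/-- Propositional evaluation of a formula, treating propositional variables and
formulas `t:A` as atoms. -/
def evalProp (v : Fml → Bool) : Fml → Bool
  | .prop n => v (.prop n)
  | .bot => false
  | .neg A => !(evalProp v A)
  | .imp A B => !(evalProp v A) || evalProp v B
  | .box t A => v (.box t A)

/-- A propositional tautology. -/
def IsTaut (A : Fml) : Prop := ∀ v : Fml → Bool, evalProp v A = true

/-- Axiom instances of the justification logic `L`. -/
inductive Axm (L : Logic) : Fml → Prop
  | taut {A} : IsTaut A → Axm L A
  | sumL {s t A} : Axm L (.imp (.box s A) (.box (.sum s t) A))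
  | sumR {s t A} : Axm L (.imp (.box s A) (.box (.sum t s) A))
  | jK {s t A B} :
      Axm L (.imp (.box s (.imp A B)) (.imp (.box t A) (.box (.app s t) B)))
  | jT {t A} : L.hasT = true → Axm L (.imp (.box t A) A)
  | jD {t} : L.hasD = true → Axm L (.imp (.box t .bot) .bot)
  | j4 {t A} : L.has4 = true → Axm L (.imp (.box t A) (.box (.bang t) (.box t A)))
  | jB {t A} : L.hasB = true →
      Axm L (.imp (.neg A) (.box (.qbar t) (.neg (.box t A))))
  | j5 {t A} : L.has5 = true →
      Axm L (.imp (.neg (.box t A)) (.box (.quest t) (.neg (.box t A))))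

/-- Formulas of the form `c_{i_n} : ⋯ : c_{i_1} : A` (n ≥ 1) with `A` an axiom
instance of `L`; exactly the formulas produced by Iterated Axiom Necessitation. -/
inductive IsIAN (L : Logic) : Fml → Prop
  | base {c A} : Axm L A → IsIAN L (.box (.const c) A)
  | step {c F} : IsIAN L F → IsIAN L (.box (.const c) F)

/-- A constant specification for `L`: a downward closed set of formulas of the
form `c_{i_n} : ⋯ : c_{i_1} : A` with `A` an axiom instance of `L`. -/
structure ConstSpec (L : Logic) where
  set : Set Fml
  mem_ian : ∀ F ∈ set, IsIAN L F
  downward : ∀ c F, Fml.box (Term.const c) F ∈ set → IsIAN L F → F ∈ set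

/-- The Hilbert system JL_CS: axioms of `L`, Modus Ponens, and Iterated Axiom
Necessitation restricted to the constant specification `cs`. -/
inductive Deriv (L : Logic) (cs : ConstSpec L) : Fml → Prop
  | axm {A} : Axm L A → Deriv L cs A
  | mp {A B} : Deriv L cs (.imp A B) → Deriv L cs A → Deriv L cs B
  | ian {F} : F ∈ cs.set → Deriv L cs F

/-- An M-model (Mkrtychev model): an admissible evidence function together with
a valuation of propositional variables. -/
structure MModel where
  ev : Term → Set Fml
  val : ℕ → Prop

/-- Truth in an M-model; `t:A` is true iff `A ∈ E(t)`. -/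
def MModel.sat (M : MModel) : Fml → Prop
  | .prop n => M.val n
  | .bot => False
  | .neg A => ¬ M.sat A
  | .imp A B => M.sat A → M.sat B
  | .box t A => A ∈ M.ev t

/-- `M` is an M-model for JL_CS: conditions E1–E3 always, and E4–E8 according to
the extra axioms of the logic `L`. -/
structure IsModel (L : Logic) (cs : ConstSpec L) (M : MModel) : Prop where
  e1 : ∀ s t A B, Fml.imp A B ∈ M.ev s → A ∈ M.ev t → B ∈ M.ev (.app s t)
  e2l : ∀ s t, M.ev s ⊆ M.ev (.sum s t)
  e2r : ∀ s t, M.ev t ⊆ M.ev (.sum s t)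
  e3 : ∀ c F, Fml.box (.const c) F ∈ cs.set → F ∈ M.ev (.const c)
  e4 : L.hasT = true → ∀ t A, A ∈ M.ev t → M.sat A
  e5 : L.hasD = true → ∀ t, Fml.bot ∉ M.ev t
  e6 : L.has4 = true → ∀ t A, A ∈ M.ev t → Fml.box t A ∈ M.ev (.bang t)
  e7 : L.hasB = true → ∀ t A, ¬ M.sat A → Fml.neg (.box t A) ∈ M.ev (.qbar t)
  e8 : L.has5 = true → ∀ t A, A ∉ M.ev t → Fml.neg (.box t A) ∈ M.ev (.quest t)

/-- `A` is JL_CS-valid: true in every M-model of JL_CS. -/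
def Valid (L : Logic) (cs : ConstSpec L) (A : Fml) : Prop :=
  ∀ M : MModel, IsModel L cs M → M.sat A

/-- `Subf A B`: `A` is a subformula of `B`. -/
inductive Subf : Fml → Fml → Prop
  | refl (A) : Subf A A
  | neg {A B} : Subf A B → Subf A (.neg B)
  | impL {A B C} : Subf A B → Subf A (.imp B C)
  | impR {A C B} : Subf A C → Subf A (.imp B C)
  | box {A B t} : Subf A B → Subf A (.box t B)

/-- `A` is a CS-subformula of the root set `R`: a subformula of a formula in
`R ∪ CS`. -/
def CSSub {L : Logic} (cs : ConstSpec L) (R : Set Fml) (A : Fml) : Prop :=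
  (∃ B ∈ R, Subf A B) ∨ (∃ F ∈ cs.set, Subf A F)

/-- `A` is a weak CS-subformula of the root set `R`: a subformula, or the
negation of a subformula, of a formula in `R ∪ CS`. -/
def WeakCSSub {L : Logic} (cs : ConstSpec L) (R : Set Fml) (A : Fml) : Prop :=
  CSSub cs R A ∨ ∃ C, A = Fml.neg C ∧ CSSub cs R C

/-- `SubTm u t`: `u` is a subterm of `t`. -/
inductive SubTm : Term → Term → Prop
  | refl (t) : SubTm t t
  | appL {u s t} : SubTm u s → SubTm u (.app s t)
  | appR {u s t} : SubTm u t → SubTm u (.app s t)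
  | sumL {u s t} : SubTm u s → SubTm u (.sum s t)
  | sumR {u s t} : SubTm u t → SubTm u (.sum s t)
  | bang {u t} : SubTm u t → SubTm u (.bang t)
  | quest {u t} : SubTm u t → SubTm u (.quest t)
  | qbar {u t} : SubTm u t → SubTm u (.qbar t)

/-- `OccT u A`: the term `u` occurs in the formula `A`. -/
inductive OccT (u : Term) : Fml → Prop
  | neg {A} : OccT u A → OccT u (.neg A)
  | impL {A B} : OccT u A → OccT u (.imp A B)
  | impR {A B} : OccT u B → OccT u (.imp A B)
  | boxT {t A} : SubTm u t → OccT u (.box t A)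
  | boxF {t A} : OccT u A → OccT u (.box t A)

/-- The term `u` occurs in (some formula of) the root set `R`. -/
def OccRoot (R : Set Fml) (u : Term) : Prop := ∃ B ∈ R, OccT u B

/-- Nodes of a tableau: JL-formulas `A`, and evidential formulas
`[t,A]` (`pos`) and `∼[t,A]` (`neg`). -/
inductive Node : Type
  | fml : Fml → Node
  | pos : Term → Fml → Node
  | neg : Term → Fml → Node
  deriving DecidableEq

/-- `TabN L cs pb cut R Γ n`: the branch `Γ` of a tableau with root set `R` has
a closed tableau continuation using `n` rule applications.  The flag `pb`
enables the analytic rules (PB), (PB_e); the flag `cut` enables the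
unrestricted cut rules (cut_f), (cut_e).  The rules (e), (e_⊥), (!), (?̄), (?)
are enabled according to the extra axioms of the logic `L`.  Base cases are the
four branch-closure conditions. -/
inductive TabN (L : Logic) (cs : ConstSpec L) (pb cut : Bool) (R : Set Fml) :
    Set Node → ℕ → Prop
  | closeF {Γ A} : Node.fml A ∈ Γ → Node.fml (.neg A) ∈ Γ → TabN L cs pb cut R Γ 0
  | closeE {Γ t A} : Node.pos t A ∈ Γ → Node.neg t A ∈ Γ → TabN L cs pb cut R Γ 0
  | closeBot {Γ} : Node.fml .bot ∈ Γ → TabN L cs pb cut R Γ 0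
  | closeCS {Γ c F} : Fml.box (.const c) F ∈ cs.set →
      Node.fml (.neg (.box (.const c) F)) ∈ Γ → TabN L cs pb cut R Γ 0
  | fNeg {Γ A n} : Node.fml (.neg (.neg A)) ∈ Γ →
      TabN L cs pb cut R (insert (Node.fml A) Γ) n → TabN L cs pb cut R Γ (n + 1)
  | fImp {Γ A B n} : Node.fml (.neg (.imp A B)) ∈ Γ →
      TabN L cs pb cut R (insert (Node.fml A) (insert (Node.fml (.neg B)) Γ)) n →
      TabN L cs pb cut R Γ (n + 1)
  | tImp {Γ A B m n} : Node.fml (.imp A B) ∈ Γ →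
      TabN L cs pb cut R (insert (Node.fml (.neg A)) Γ) m →
      TabN L cs pb cut R (insert (Node.fml B) Γ) n →
      TabN L cs pb cut R Γ (m + n + 1)
  | te {Γ t A n} : Node.fml (.box t A) ∈ Γ →
      TabN L cs pb cut R (insert (Node.pos t A) Γ) n → TabN L cs pb cut R Γ (n + 1)
  | fe {Γ t A n} : Node.fml (.neg (.box t A)) ∈ Γ →
      TabN L cs pb cut R (insert (Node.neg t A) Γ) n → TabN L cs pb cut R Γ (n + 1)
  | plusL {Γ t s A n} : Node.neg (.sum t s) A ∈ Γ →
      TabN L cs pb cut R (insert (Node.neg t A) Γ) n → TabN L cs pb cut R Γ (n + 1)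
  | plusR {Γ t s A n} : Node.neg (.sum t s) A ∈ Γ →
      TabN L cs pb cut R (insert (Node.neg s A) Γ) n → TabN L cs pb cut R Γ (n + 1)
  | appR {Γ s t A B n} : Node.pos s (.imp A B) ∈ Γ → Node.pos t A ∈ Γ →
      CSSub cs R (.imp A B) → OccRoot R (.app s t) →
      TabN L cs pb cut R (insert (Node.pos (.app s t) B) Γ) n →
      TabN L cs pb cut R Γ (n + 1)
  | rulePB {Γ A m n} : pb = true → CSSub cs R A →
      TabN L cs pb cut R (insert (Node.fml A) Γ) m →
      TabN L cs pb cut R (insert (Node.fml (.neg A)) Γ) n →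
      TabN L cs pb cut R Γ (m + n + 1)
  | rulePBe {Γ t A m n} : pb = true → CSSub cs R A → OccRoot R t →
      TabN L cs pb cut R (insert (Node.pos t A) Γ) m →
      TabN L cs pb cut R (insert (Node.neg t A) Γ) n →
      TabN L cs pb cut R Γ (m + n + 1)
  | cutF {Γ A m n} : cut = true →
      TabN L cs pb cut R (insert (Node.fml A) Γ) m →
      TabN L cs pb cut R (insert (Node.fml (.neg A)) Γ) n →
      TabN L cs pb cut R Γ (m + n + 1)
  | cutE {Γ t A m n} : cut = true →
      TabN L cs pb cut R (insert (Node.pos t A) Γ) m →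
      TabN L cs pb cut R (insert (Node.neg t A) Γ) n →
      TabN L cs pb cut R Γ (m + n + 1)
  | ruleT {Γ t A n} : L.hasT = true → Node.pos t A ∈ Γ →
      TabN L cs pb cut R (insert (Node.fml A) Γ) n → TabN L cs pb cut R Γ (n + 1)
  | ruleD {Γ t n} : L.hasD = true → Node.pos t .bot ∈ Γ →
      TabN L cs pb cut R (insert (Node.fml .bot) Γ) n → TabN L cs pb cut R Γ (n + 1)
  | rule4 {Γ t A n} : L.has4 = true → Node.neg (.bang t) (.box t A) ∈ Γ →
      TabN L cs pb cut R (insert (Node.neg t A) Γ) n → TabN L cs pb cut R Γ (n + 1)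
  | ruleB {Γ t A n} : L.hasB = true → Node.neg (.qbar t) (.neg (.box t A)) ∈ Γ →
      TabN L cs pb cut R (insert (Node.fml A) Γ) n → TabN L cs pb cut R Γ (n + 1)
  | rule5 {Γ t A n} : L.has5 = true → Node.neg (.quest t) (.neg (.box t A)) ∈ Γ →
      TabN L cs pb cut R (insert (Node.pos t A) Γ) n → TabN L cs pb cut R Γ (n + 1)

/-- There is a closed tableau below the branch `Γ` (root set `R`). -/
def Tab (L : Logic) (cs : ConstSpec L) (pb cut : Bool) (R : Set Fml)
    (Γ : Set Node) : Prop :=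
  ∃ n, TabN L cs pb cut R Γ n

/-- A tableau proof of `A`: a closed tableau whose root is `¬A`. -/
def TabProof (L : Logic) (cs : ConstSpec L) (pb cut : Bool) (A : Fml) : Prop :=
  Tab L cs pb cut {Fml.neg A} {Node.fml (Fml.neg A)}

/-- A single application of a JL^e_CS-tableau rule to the branch `Γ` (root set
`R`), producing the list of extended branches (one for a non-branching rule,
two for a branching rule). -/
inductive RuleApp (L : Logic) (cs : ConstSpec L) (R : Set Fml) (Γ : Set Node) :
    List (Set Node) → Prop
  | fNeg {A} : Node.fml (.neg (.neg A)) ∈ Γ →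
      RuleApp L cs R Γ [insert (Node.fml A) Γ]
  | fImp {A B} : Node.fml (.neg (.imp A B)) ∈ Γ →
      RuleApp L cs R Γ [insert (Node.fml A) (insert (Node.fml (.neg B)) Γ)]
  | tImp {A B} : Node.fml (.imp A B) ∈ Γ →
      RuleApp L cs R Γ [insert (Node.fml (.neg A)) Γ, insert (Node.fml B) Γ]
  | te {t A} : Node.fml (.box t A) ∈ Γ → RuleApp L cs R Γ [insert (Node.pos t A) Γ]
  | fe {t A} : Node.fml (.neg (.box t A)) ∈ Γ →
      RuleApp L cs R Γ [insert (Node.neg t A) Γ]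
  | plusL {t s A} : Node.neg (.sum t s) A ∈ Γ →
      RuleApp L cs R Γ [insert (Node.neg t A) Γ]
  | plusR {t s A} : Node.neg (.sum t s) A ∈ Γ →
      RuleApp L cs R Γ [insert (Node.neg s A) Γ]
  | appR {s t A B} : Node.pos s (.imp A B) ∈ Γ → Node.pos t A ∈ Γ →
      CSSub cs R (.imp A B) → OccRoot R (.app s t) →
      RuleApp L cs R Γ [insert (Node.pos (.app s t) B) Γ]
  | rulePB {A} : CSSub cs R A →
      RuleApp L cs R Γ [insert (Node.fml A) Γ, insert (Node.fml (.neg A)) Γ]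
  | rulePBe {t A} : CSSub cs R A → OccRoot R t →
      RuleApp L cs R Γ [insert (Node.pos t A) Γ, insert (Node.neg t A) Γ]
  | ruleT {t A} : L.hasT = true → Node.pos t A ∈ Γ →
      RuleApp L cs R Γ [insert (Node.fml A) Γ]
  | ruleD {t} : L.hasD = true → Node.pos t .bot ∈ Γ →
      RuleApp L cs R Γ [insert (Node.fml .bot) Γ]
  | rule4 {t A} : L.has4 = true → Node.neg (.bang t) (.box t A) ∈ Γ →
      RuleApp L cs R Γ [insert (Node.neg t A) Γ]
  | ruleB {t A} : L.hasB = true → Node.neg (.qbar t) (.neg (.box t A)) ∈ Γ →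
      RuleApp L cs R Γ [insert (Node.fml A) Γ]
  | rule5 {t A} : L.has5 = true → Node.neg (.quest t) (.neg (.box t A)) ∈ Γ →
      RuleApp L cs R Γ [insert (Node.pos t A) Γ]

/-- Satisfaction of tableau nodes in an M-model: `M` satisfies `[t,A]` iff
`A ∈ E(t)`, and satisfies `∼[t,A]` iff `A ∉ E(t)`. -/
def NodeSat (M : MModel) : Node → Prop
  | .fml A => M.sat A
  | .pos t A => A ∈ M.ev t
  | .neg t A => A ∉ M.ev t

/-- Branches reachable from the initial branch by tableau rule applications. -/
inductive Reach (L : Logic) (cs : ConstSpec L) (R : Set Fml) :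
    Set Node → Set Node → Prop
  | refl (Γ) : Reach L cs R Γ Γ
  | step {Γ Γ' Γ'' exts} : Reach L cs R Γ Γ' → RuleApp L cs R Γ' exts →
      Γ'' ∈ exts → Reach L cs R Γ Γ''

/-- One non-redundant tableau construction step: a rule application properly
extending the branch. -/
def Step (L : Logic) (cs : ConstSpec L) (R : Set Fml) (Γ Γ' : Set Node) : Prop :=
  ∃ exts, RuleApp L cs R Γ exts ∧ Γ' ∈ exts ∧ Γ ⊂ Γ'

/-- The term is in the language of the logic `L` (which contains those
operations occurring in the axioms of `L`). -/
def TermInLang (L : Logic) : Term → Prop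
  | .var _ => True
  | .const _ => True
  | .app s t => TermInLang L s ∧ TermInLang L t
  | .sum s t => TermInLang L s ∧ TermInLang L t
  | .bang t => L.has4 = true ∧ TermInLang L t
  | .quest t => L.has5 = true ∧ TermInLang L t
  | .qbar t => L.hasB = true ∧ TermInLang L t

/-- The formula is in the language of the logic `L`. -/
def FmlInLang (L : Logic) : Fml → Prop
  | .prop _ => True
  | .bot => True
  | .neg A => FmlInLang L A
  | .imp A B => FmlInLang L A ∧ FmlInLang L B
  | .box t A => TermInLang L t ∧ FmlInLang L A

/-- The initial branch of a tableau for a finite set `S` of formulas. -/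
def branchOf (S : Finset Fml) : Set Node := Node.fml '' (↑S : Set Fml)

end JLTab

/-!
Soundness is truth preservation along tableau rules. For completeness, compactness of closedness
and Zorn's lemma extend an open branch to a maximal one, which is consistent and saturated under the
rules (a Hintikka set).

To read a model off a Hintikka set, close its positive nodes `[t,A]`, with `A` a CS-subformula of
the root, under the conditions E1, E2 and E6. E4 need not hold for the result, so under jT the
evidence is restricted by declaring `t:A` true iff `A` is generated evidence for `t` and `A` is
itself true, a recursion on `A`; this restriction keeps all the other conditions. Analyticity enters
in a single place: evidence generated for a term of the root is already on the branch whenever its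
formula is a CS-subformula, because every implication generated as evidence is one.
-/

namespace JLTab

variable {L : Logic} {cs : ConstSpec L} {pb cut : Bool} {R : Set Fml} {Γ : Set Node}

/-! ### Subformulas and occurrences of terms -/

theorem Subf.trans {A B C : Fml} (hAB : Subf A B) (hBC : Subf B C) : Subf A C := by
  induction hBC with
  | refl => exact hAB
  | neg _ ih => exact .neg ih
  | impL _ ih => exact .impL ih
  | impR _ ih => exact .impR ih
  | box _ ih => exact .box ih

theorem CSSub.of_subf {A B : Fml} (hB : CSSub cs R B) (hAB : Subf A B) : CSSub cs R A :=
  hB.imp (fun ⟨D, hD, hBD⟩ => ⟨D, hD, hAB.trans hBD⟩) (fun ⟨D, hD, hBD⟩ => ⟨D, hD, hAB.trans hBD⟩)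

theorem SubTm.trans {s t u : Term} (hst : SubTm s t) (htu : SubTm t u) : SubTm s u := by
  induction htu with
  | refl => exact hst
  | appL _ ih => exact .appL ih
  | appR _ ih => exact .appR ih
  | sumL _ ih => exact .sumL ih
  | sumR _ ih => exact .sumR ih
  | bang _ ih => exact .bang ih
  | quest _ ih => exact .quest ih
  | qbar _ ih => exact .qbar ih

theorem OccT.of_subTm {s t : Term} {A : Fml} (ht : OccT t A) (hst : SubTm s t) : OccT s A := by
  induction ht with
  | neg _ ih => exact .neg ih
  | impL _ ih => exact .impL ih
  | impR _ ih => exact .impR ih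
  | boxT h => exact .boxT (hst.trans h)
  | boxF _ ih => exact .boxF ih

theorem OccT.of_subf {t : Term} {A B : Fml} (ht : OccT t A) (hAB : Subf A B) : OccT t B := by
  induction hAB with
  | refl => exact ht
  | neg _ ih => exact .neg ih
  | impL _ ih => exact .impL ih
  | impR _ ih => exact .impR ih
  | box _ ih => exact .boxF ih

theorem OccRoot.of_subTm {s t : Term} (ht : OccRoot R t) (hst : SubTm s t) : OccRoot R s :=
  let ⟨D, hD, h⟩ := ht
  ⟨D, hD, h.of_subTm hst⟩

/-! ### Soundness -/

/-- Satisfaction of a tableau branch in an M-model: all its nodes are satisfied. -/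
def BranchSat (M : MModel) (Γ : Set Node) : Prop := ∀ x ∈ Γ, NodeSat M x

theorem BranchSat.insert {M : MModel} {x : Node} (hΓ : BranchSat M Γ) (hx : NodeSat M x) :
    BranchSat M (insert x Γ) :=
  Set.forall_mem_insert.2 ⟨hx, hΓ⟩

theorem TabN.not_branchSat {M : MModel} {n : ℕ} (hM : IsModel L cs M)
    (h : TabN L cs pb cut R Γ n) : ¬ BranchSat M Γ := by
  induction h with
  | closeF hA hnA => exact fun H => H _ hnA (H _ hA)
  | closeE hp hn => exact fun H => H _ hn (H _ hp)
  | closeBot hbot => exact fun H => H _ hbot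
  | closeCS hF hnF => exact fun H => H _ hnF (hM.e3 _ _ hF)
  | fNeg h _ ih => exact fun H => ih (H.insert (not_not.1 (H _ h)))
  | @fImp _ A B _ h _ ih =>
    intro H
    obtain ⟨hA, hnB⟩ : NodeSat M (.fml A) ∧ NodeSat M (.fml (.neg B)) := Classical.not_imp.1 (H _ h)
    exact ih ((H.insert hnB).insert hA)
  | tImp h _ _ ihA ihB =>
    exact fun H => ihA (H.insert fun hA => ihB (H.insert (H _ h hA)))
  | te h _ ih => exact fun H => ih (H.insert (x := .pos _ _) (H (.fml _) h))
  | fe h _ ih => exact fun H => ih (H.insert (x := .neg _ _) (H (.fml _) h))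
  | plusL h _ ih => exact fun H => ih (H.insert fun k => H _ h (hM.e2l _ _ k))
  | plusR h _ ih => exact fun H => ih (H.insert fun k => H _ h (hM.e2r _ _ k))
  | appR hs ht _ _ _ ih => exact fun H => ih (H.insert (hM.e1 _ _ _ _ (H _ hs) (H _ ht)))
  | rulePB _ _ _ _ ihA ihnA => exact fun H => ihnA (H.insert fun hA => ihA (H.insert hA))
  | rulePBe _ _ _ _ _ ihp ihn => exact fun H => ihn (H.insert fun hA => ihp (H.insert hA))
  | cutF _ _ _ ihA ihnA => exact fun H => ihnA (H.insert fun hA => ihA (H.insert hA))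
  | cutE _ _ _ ihp ihn => exact fun H => ihn (H.insert fun hA => ihp (H.insert hA))
  | ruleT hT h _ ih => exact fun H => ih (H.insert (hM.e4 hT _ _ (H _ h)))
  | ruleD hD h _ _ => exact fun H => hM.e5 hD _ (H _ h)
  | rule4 h4 h _ ih => exact fun H => ih (H.insert fun k => H _ h (hM.e6 h4 _ _ k))
  | ruleB hB h _ ih => exact fun H => ih (H.insert (not_imp_comm.1 (hM.e7 hB _ _) (H _ h)))
  | rule5 h5 h _ ih => exact fun H => ih (H.insert (not_imp_comm.1 (hM.e8 h5 _ _) (H _ h)))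

/-! ### Compactness and maximal open branches -/

theorem eventually_mem_insert {ι α : Type*} {l : Filter ι} {s : Set α} {f : ι → Set α}
    (hf : ∀ x ∈ s, ∀ᶠ i in l, x ∈ f i) (a : α) :
    ∀ x ∈ insert a s, ∀ᶠ i in l, x ∈ insert a (f i) :=
  Set.forall_mem_insert.2
    ⟨.of_forall fun _ => Set.mem_insert _ _, fun x hx => (hf x hx).mono fun _ => Or.inr⟩

/- A closed tableau uses finitely many nodes of its branch, and filters are closed under finite
intersections. -/
theorem TabN.eventually_tab {ι : Type*} {l : Filter ι} {f : ι → Set Node} {n : ℕ}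
    (h : TabN L cs pb cut R Γ n) (hf : ∀ x ∈ Γ, ∀ᶠ i in l, x ∈ f i) :
    ∀ᶠ i in l, Tab L cs pb cut R (f i) := by
  have ins {Δ : Set Node} {g : ι → Set Node} := @eventually_mem_insert ι Node l Δ g
  induction h generalizing f with
  | closeF hA hnA => filter_upwards [hf _ hA, hf _ hnA] with i a b using ⟨_, .closeF a b⟩
  | closeE hp hn => filter_upwards [hf _ hp, hf _ hn] with i a b using ⟨_, .closeE a b⟩
  | closeBot h => filter_upwards [hf _ h] with i a using ⟨_, .closeBot a⟩
  | closeCS hF h => filter_upwards [hf _ h] with i a using ⟨_, .closeCS hF a⟩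
  | fNeg h _ ih => filter_upwards [hf _ h, ih (ins hf _)] with i a ⟨_, b⟩ using ⟨_, .fNeg a b⟩
  | fImp h _ ih =>
    filter_upwards [hf _ h, ih (ins (ins hf _) _)] with i a ⟨_, b⟩ using ⟨_, .fImp a b⟩
  | tImp h _ _ ih₁ ih₂ =>
    filter_upwards [hf _ h, ih₁ (ins hf _), ih₂ (ins hf _)] with i a ⟨_, b⟩ ⟨_, c⟩
      using ⟨_, .tImp a b c⟩
  | te h _ ih => filter_upwards [hf _ h, ih (ins hf _)] with i a ⟨_, b⟩ using ⟨_, .te a b⟩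
  | fe h _ ih => filter_upwards [hf _ h, ih (ins hf _)] with i a ⟨_, b⟩ using ⟨_, .fe a b⟩
  | plusL h _ ih => filter_upwards [hf _ h, ih (ins hf _)] with i a ⟨_, b⟩ using ⟨_, .plusL a b⟩
  | plusR h _ ih => filter_upwards [hf _ h, ih (ins hf _)] with i a ⟨_, b⟩ using ⟨_, .plusR a b⟩
  | appR hs ht hA ho _ ih =>
    filter_upwards [hf _ hs, hf _ ht, ih (ins hf _)] with i a b ⟨_, c⟩ using ⟨_, .appR a b hA ho c⟩
  | rulePB hpb hA _ _ ih₁ ih₂ =>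
    filter_upwards [ih₁ (ins hf _), ih₂ (ins hf _)] with i ⟨_, a⟩ ⟨_, b⟩
      using ⟨_, .rulePB hpb hA a b⟩
  | rulePBe hpb hA ht _ _ ih₁ ih₂ =>
    filter_upwards [ih₁ (ins hf _), ih₂ (ins hf _)] with i ⟨_, a⟩ ⟨_, b⟩
      using ⟨_, .rulePBe hpb hA ht a b⟩
  | cutF hcut _ _ ih₁ ih₂ =>
    filter_upwards [ih₁ (ins hf _), ih₂ (ins hf _)] with i ⟨_, a⟩ ⟨_, b⟩ using ⟨_, .cutF hcut a b⟩
  | cutE hcut _ _ ih₁ ih₂ =>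
    filter_upwards [ih₁ (ins hf _), ih₂ (ins hf _)] with i ⟨_, a⟩ ⟨_, b⟩ using ⟨_, .cutE hcut a b⟩
  | ruleT hT h _ ih =>
    filter_upwards [hf _ h, ih (ins hf _)] with i a ⟨_, b⟩ using ⟨_, .ruleT hT a b⟩
  | ruleD hD h _ ih =>
    filter_upwards [hf _ h, ih (ins hf _)] with i a ⟨_, b⟩ using ⟨_, .ruleD hD a b⟩
  | rule4 h4 h _ ih =>
    filter_upwards [hf _ h, ih (ins hf _)] with i a ⟨_, b⟩ using ⟨_, .rule4 h4 a b⟩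
  | ruleB hB h _ ih =>
    filter_upwards [hf _ h, ih (ins hf _)] with i a ⟨_, b⟩ using ⟨_, .ruleB hB a b⟩
  | rule5 h5 h _ ih =>
    filter_upwards [hf _ h, ih (ins hf _)] with i a ⟨_, b⟩ using ⟨_, .rule5 h5 a b⟩

theorem Tab.exists_mem_of_sUnion {c : Set (Set Node)} (hc : IsChain (· ⊆ ·) c) (hne : c.Nonempty)
    (h : Tab L cs pb cut R (⋃₀ c)) : ∃ Δ ∈ c, Tab L cs pb cut R Δ := by
  obtain ⟨n, hn⟩ := h
  have : Nonempty c := hne.to_subtype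
  have : IsDirectedOrder c := directedOn_iff_isDirectedOrder.1 hc.directedOn
  have mem_eventually (x : Node) (hx : x ∈ ⋃₀ c) :
      ∀ᶠ Δ : c in Filter.atTop, x ∈ (Δ : Set Node) := by
    obtain ⟨Δ, hΔ, hxΔ⟩ := hx
    exact (Filter.eventually_ge_atTop ⟨Δ, hΔ⟩).mono fun _ hle => hle hxΔ
  obtain ⟨Δ, hΔ⟩ := (hn.eventually_tab mem_eventually).exists
  exact ⟨Δ, Δ.2, hΔ⟩

theorem exists_maximal_not_tab (hΓ : ¬ Tab L cs pb cut R Γ) :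
    ∃ Δ, Γ ⊆ Δ ∧ Maximal (fun Δ => ¬ Tab L cs pb cut R Δ) Δ := by
  refine zorn_subset_nonempty {Δ | ¬ Tab L cs pb cut R Δ} (fun c hopen hc hne => ?_) Γ hΓ
  refine ⟨⋃₀ c, fun h => ?_, fun _ => Set.subset_sUnion_of_mem⟩
  obtain ⟨Δ, hΔ, hclosed⟩ := Tab.exists_mem_of_sUnion hc hne h
  exact hopen hΔ hclosed

/-! ### Hintikka sets -/

/-- Hintikka sets are the completed open branches: none of the closure conditions applies, and each
applicable rule has one of its outcomes already contained in the branch. -/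
structure IsHintikka (L : Logic) (cs : ConstSpec L) (R : Set Fml) (Γ : Set Node) : Prop where
  neg_notMem : ∀ {A}, Node.fml A ∈ Γ → Node.fml (.neg A) ∉ Γ
  ev_neg_notMem : ∀ {t A}, Node.pos t A ∈ Γ → Node.neg t A ∉ Γ
  bot_notMem : Node.fml .bot ∉ Γ
  neg_cs_notMem : ∀ {c F}, Fml.box (.const c) F ∈ cs.set →
    Node.fml (.neg (.box (.const c) F)) ∉ Γ
  saturated : ∀ {exts}, RuleApp L cs R Γ exts → ∃ Δ ∈ exts, Δ ⊆ Γ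

theorem RuleApp.subset {exts : List (Set Node)} (h : RuleApp L cs R Γ exts) :
    ∀ Δ ∈ exts, Γ ⊆ Δ := by
  have hins (x : Node) : Γ ⊆ insert x Γ := Set.subset_insert x Γ
  cases h with
  | fImp => simpa using (hins _).trans (Set.subset_insert _ _)
  | _ => simp [hins]

theorem RuleApp.tab {exts : List (Set Node)} (h : RuleApp L cs R Γ exts)
    (hexts : ∀ Δ ∈ exts, Tab L cs true cut R Δ) : Tab L cs true cut R Γ := by
  cases h <;> simp only [List.forall_mem_cons, List.not_mem_nil, false_imp_iff, implies_true,
    and_true] at hexts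
  case fNeg h => exact let ⟨_, k⟩ := hexts; ⟨_, .fNeg h k⟩
  case fImp h => exact let ⟨_, k⟩ := hexts; ⟨_, .fImp h k⟩
  case tImp h => exact let ⟨⟨_, k₁⟩, ⟨_, k₂⟩⟩ := hexts; ⟨_, .tImp h k₁ k₂⟩
  case te h => exact let ⟨_, k⟩ := hexts; ⟨_, .te h k⟩
  case fe h => exact let ⟨_, k⟩ := hexts; ⟨_, .fe h k⟩
  case plusL h => exact let ⟨_, k⟩ := hexts; ⟨_, .plusL h k⟩
  case plusR h => exact let ⟨_, k⟩ := hexts; ⟨_, .plusR h k⟩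
  case appR hs ht hA ho => exact let ⟨_, k⟩ := hexts; ⟨_, .appR hs ht hA ho k⟩
  case rulePB hA => exact let ⟨⟨_, k₁⟩, ⟨_, k₂⟩⟩ := hexts; ⟨_, .rulePB rfl hA k₁ k₂⟩
  case rulePBe hA ht => exact let ⟨⟨_, k₁⟩, ⟨_, k₂⟩⟩ := hexts; ⟨_, .rulePBe rfl hA ht k₁ k₂⟩
  case ruleT hT h => exact let ⟨_, k⟩ := hexts; ⟨_, .ruleT hT h k⟩
  case ruleD hD h => exact let ⟨_, k⟩ := hexts; ⟨_, .ruleD hD h k⟩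
  case rule4 h4 h => exact let ⟨_, k⟩ := hexts; ⟨_, .rule4 h4 h k⟩
  case ruleB hB h => exact let ⟨_, k⟩ := hexts; ⟨_, .ruleB hB h k⟩
  case rule5 h5 h => exact let ⟨_, k⟩ := hexts; ⟨_, .rule5 h5 h k⟩

theorem isHintikka_of_maximal_not_tab (hΓ : Maximal (fun Δ => ¬ Tab L cs true cut R Δ) Γ) :
    IsHintikka L cs R Γ where
  neg_notMem hA hnA := hΓ.prop ⟨_, .closeF hA hnA⟩
  ev_neg_notMem hp hn := hΓ.prop ⟨_, .closeE hp hn⟩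
  bot_notMem h := hΓ.prop ⟨_, .closeBot h⟩
  neg_cs_notMem hF h := hΓ.prop ⟨_, .closeCS hF h⟩
  saturated {exts} hr := by
    by_contra! hexts
    refine hΓ.prop (hr.tab fun Δ hΔ => ?_)
    by_contra hopen
    exact hexts Δ hΔ (hΓ.le_of_ge hopen (hr.subset Δ hΔ))

namespace IsHintikka

theorem mem_of_ruleApp {x : Node} (hΓ : IsHintikka L cs R Γ)
    (hr : RuleApp L cs R Γ [insert x Γ]) : x ∈ Γ := by
  simpa [Set.insert_subset_iff] using hΓ.saturated hr

theorem mem_or_mem_of_ruleApp {x y : Node} (hΓ : IsHintikka L cs R Γ)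
    (hr : RuleApp L cs R Γ [insert x Γ, insert y Γ]) : x ∈ Γ ∨ y ∈ Γ := by
  simpa [Set.insert_subset_iff] using hΓ.saturated hr

theorem mem_and_neg_mem_of_neg_imp {A B : Fml} (hΓ : IsHintikka L cs R Γ)
    (h : Node.fml (.neg (.imp A B)) ∈ Γ) : Node.fml A ∈ Γ ∧ Node.fml (.neg B) ∈ Γ := by
  simpa [Set.insert_subset_iff] using hΓ.saturated (.fImp h)

theorem pos_mem_of_cs {c : ℕ} {F : Fml} (hΓ : IsHintikka L cs R Γ)
    (hF : Fml.box (.const c) F ∈ cs.set) : Node.pos (.const c) F ∈ Γ := by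
  have hbox : Node.fml (.box (.const c) F) ∈ Γ :=
    (hΓ.mem_or_mem_of_ruleApp (.rulePB (.inr ⟨_, hF, .refl _⟩))).resolve_right
      (hΓ.neg_cs_notMem hF)
  exact hΓ.mem_of_ruleApp (.te hbox)

theorem pos_mem_of_neg_notMem {t : Term} {A : Fml} (hΓ : IsHintikka L cs R Γ)
    (hA : CSSub cs R A) (ht : OccRoot R t) (h : Node.neg t A ∉ Γ) : Node.pos t A ∈ Γ :=
  (hΓ.mem_or_mem_of_ruleApp (.rulePBe hA ht)).resolve_right h

end IsHintikka

/-! ### Models generated by evidence -/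

theorem evalProp_eq_true_iff_sat (M : MModel) {v : Fml → Bool} (hv : ∀ A, v A = true ↔ M.sat A)
    (A : Fml) : evalProp v A = true ↔ M.sat A := by
  induction A with
  | prop n => exact hv _
  | bot => simp [evalProp, MModel.sat]
  | neg A ih => simp [evalProp, MModel.sat, ← ih]
  | imp A B ihA ihB => simp [evalProp, MModel.sat, ← ihA, ← ihB, imp_iff_not_or]
  | box t A => exact hv _

theorem IsTaut.sat {A : Fml} (hA : IsTaut A) (M : MModel) : M.sat A := by
  classical
  exact (evalProp_eq_true_iff_sat M (v := fun B => decide (M.sat B)) (by simp) A).1 (hA _)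

theorem Axm.sat {M : MModel} {A : Fml} (hM : IsModel L cs M) (hA : Axm L A) : M.sat A := by
  cases hA with
  | taut h => exact h.sat M
  | sumL => exact fun h => hM.e2l _ _ h
  | sumR => exact fun h => hM.e2r _ _ h
  | jK => exact hM.e1 _ _ _ _
  | jT hT => exact hM.e4 hT _ _
  | jD hD => exact hM.e5 hD _
  | j4 h4 => exact hM.e6 h4 _ _
  | jB hB => exact hM.e7 hB _ _
  | j5 h5 => exact hM.e8 h5 _ _

instance : EmptyCollection (ConstSpec L) :=
  ⟨⟨∅, fun _ h => h.elim, fun _ _ h => h.elim⟩⟩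

/-- The least evidence relation containing `E` and closed under the conditions E1, E2 and, when j4
is present, E6. -/
inductive EvClosure (L : Logic) (E : Term → Fml → Prop) : Term → Fml → Prop
  | base {t A} : E t A → EvClosure L E t A
  | app {s t A B} : EvClosure L E s (.imp A B) → EvClosure L E t A → EvClosure L E (.app s t) B
  | sumL {s t A} : EvClosure L E s A → EvClosure L E (.sum s t) A
  | sumR {s t A} : EvClosure L E t A → EvClosure L E (.sum s t) A
  | bang {t A} : L.has4 = true → EvClosure L E t A → EvClosure L E (.bang t) (.box t A)

/-- Truth relative to an evidence relation `E` that need not satisfy E4: `t:A` requires `E t A` and,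
when jT is present, the truth of `A`. -/
def FactiveTruth (L : Logic) (E : Term → Fml → Prop) (v : ℕ → Prop) : Fml → Prop
  | .prop n => v n
  | .bot => False
  | .neg A => ¬ FactiveTruth L E v A
  | .imp A B => FactiveTruth L E v A → FactiveTruth L E v B
  | .box t A => E t A ∧ (L.hasT = true → FactiveTruth L E v A)

/-- The M-model whose evidence is `E`, cut down to true formulas when jT is present. -/
def factiveModel (L : Logic) (E : Term → Fml → Prop) (v : ℕ → Prop) : MModel where
  ev t := {A | E t A ∧ (L.hasT = true → FactiveTruth L E v A)}
  val := v

section FactiveModel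

variable {E : Term → Fml → Prop} {v : ℕ → Prop}

theorem factiveModel_sat {A : Fml} : (factiveModel L E v).sat A ↔ FactiveTruth L E v A := by
  induction A with
  | prop n => rfl
  | bot => rfl
  | neg A ih => simp only [MModel.sat, FactiveTruth, ih]
  | imp A B ihA ihB => simp only [MModel.sat, FactiveTruth, ihA, ihB]
  | box t A => rfl

theorem mem_factiveModel_ev {t : Term} {A : Fml} :
    A ∈ (factiveModel L E v).ev t ↔ E t A ∧ (L.hasT = true → (factiveModel L E v).sat A) := by
  rw [factiveModel_sat]; rfl

theorem isModel_empty_factiveModel (hB : L.hasB = false) (h5 : L.has5 = false)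
    (hDT : L.hasD = true → L.hasT = true) :
    IsModel L ∅ (factiveModel L (EvClosure L E) v) where
  e1 _ _ _ _ hs ht := ⟨.app hs.1 ht.1, fun hT => hs.2 hT (ht.2 hT)⟩
  e2l _ _ _ h := ⟨.sumL h.1, h.2⟩
  e2r _ _ _ h := ⟨.sumR h.1, h.2⟩
  e3 _ _ h := h.elim
  e4 hT _ _ h := (mem_factiveModel_ev.1 h).2 hT
  e5 hD _ h := h.2 (hDT hD)
  e6 h4 _ _ h := ⟨.bang h4 h.1, fun _ => h⟩
  e7 h := by simp [hB] at h
  e8 h := by simp [h5] at h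

theorem isModel_factiveModel (hB : L.hasB = false) (h5 : L.has5 = false)
    (hDT : L.hasD = true → L.hasT = true)
    (hcs : ∀ c F, Fml.box (.const c) F ∈ cs.set → E (.const c) F) :
    IsModel L cs (factiveModel L (EvClosure L E) v) := by
  have hM : IsModel L ∅ (factiveModel L (EvClosure L E) v) :=
    isModel_empty_factiveModel hB h5 hDT
  have sat_of_cs {F : Fml} (hian : IsIAN L F) (hF : F ∈ cs.set) :
      (factiveModel L (EvClosure L E) v).sat F := by
    induction hian with
    | base hA => exact mem_factiveModel_ev.2 ⟨.base (hcs _ _ hF), fun _ => hA.sat hM⟩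
    | step hG ih =>
      exact mem_factiveModel_ev.2 ⟨.base (hcs _ _ hF), fun _ => ih (cs.downward _ _ hF hG)⟩
  exact { hM with e3 := fun c F hF => sat_of_cs (cs.mem_ian _ hF) hF }

end FactiveModel

/-! ### Completeness -/

/-- The evidence read off a branch: its positive evidential nodes, restricted to CS-subformulas of
the root set so that the analytic rule for `·` applies to their implications. -/
def BranchEv (cs : ConstSpec L) (R : Set Fml) (Γ : Set Node) (t : Term) (A : Fml) : Prop :=
  Node.pos t A ∈ Γ ∧ CSSub cs R A

/-- The canonical M-model of a branch. -/
def branchModel (cs : ConstSpec L) (R : Set Fml) (Γ : Set Node) : MModel :=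
  factiveModel L (EvClosure L (BranchEv cs R Γ)) fun n => Node.fml (.prop n) ∈ Γ

theorem EvClosure.cssub_of_imp {t : Term} {A B : Fml} :
    EvClosure L (BranchEv cs R Γ) t (.imp A B) → CSSub cs R (.imp A B)
  | .base h => h.2
  | .app h _ => h.cssub_of_imp.of_subf (.impR (.refl _))
  | .sumL h => h.cssub_of_imp
  | .sumR h => h.cssub_of_imp

namespace IsHintikka

theorem pos_mem_of_evClosure {t : Term} {A : Fml} (hΓ : IsHintikka L cs R Γ)
    (h : EvClosure L (BranchEv cs R Γ) t A) (ht : OccRoot R t) (hA : CSSub cs R A) :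
    Node.pos t A ∈ Γ := by
  induction h with
  | base h => exact h.1
  | app hs _ ihs iht =>
    have himp := hs.cssub_of_imp
    exact hΓ.mem_of_ruleApp (.appR (ihs (ht.of_subTm (.appL (.refl _))) himp)
      (iht (ht.of_subTm (.appR (.refl _))) (himp.of_subf (.impL (.refl _)))) himp ht)
  | sumL _ ih =>
    exact hΓ.pos_mem_of_neg_notMem hA ht fun hn =>
      hΓ.ev_neg_notMem (ih (ht.of_subTm (.sumL (.refl _))) hA) (hΓ.mem_of_ruleApp (.plusL hn))
  | sumR _ ih =>
    exact hΓ.pos_mem_of_neg_notMem hA ht fun hn =>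
      hΓ.ev_neg_notMem (ih (ht.of_subTm (.sumR (.refl _))) hA) (hΓ.mem_of_ruleApp (.plusR hn))
  | bang h4 _ ih =>
    exact hΓ.pos_mem_of_neg_notMem hA ht fun hn =>
      hΓ.ev_neg_notMem (ih (ht.of_subTm (.bang (.refl _))) (hA.of_subf (.box (.refl _))))
        (hΓ.mem_of_ruleApp (.rule4 h4 hn))

theorem isModel_branchModel (hΓ : IsHintikka L cs R Γ) (hB : L.hasB = false)
    (h5 : L.has5 = false) (hDT : L.hasD = true → L.hasT = true) :
    IsModel L cs (branchModel cs R Γ) :=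
  isModel_factiveModel hB h5 hDT fun _ _ hF =>
    ⟨hΓ.pos_mem_of_cs hF, .inr ⟨_, hF, .box (.refl _)⟩⟩

theorem branchModel_truth {A D : Fml} (hΓ : IsHintikka L cs R Γ) (hD : D ∈ R) (hA : Subf A D) :
    (Node.fml A ∈ Γ → (branchModel cs R Γ).sat A) ∧
      (Node.fml (.neg A) ∈ Γ → ¬ (branchModel cs R Γ).sat A) := by
  induction A with
  | prop n => exact ⟨id, fun hn h => hΓ.neg_notMem h hn⟩
  | bot => exact ⟨hΓ.bot_notMem, fun _ => id⟩
  | neg A ih =>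
    obtain ⟨sat_A, not_sat_A⟩ := ih (.trans (.neg (.refl _)) hA)
    exact ⟨not_sat_A, fun h => not_not.2 (sat_A (hΓ.mem_of_ruleApp (.fNeg h)))⟩
  | imp A B ihA ihB =>
    obtain ⟨sat_A, not_sat_A⟩ := ihA (.trans (.impL (.refl _)) hA)
    obtain ⟨sat_B, not_sat_B⟩ := ihB (.trans (.impR (.refl _)) hA)
    refine ⟨fun h satA => ?_, fun h => ?_⟩
    · exact (hΓ.mem_or_mem_of_ruleApp (.tImp h)).elim (fun hnA => absurd satA (not_sat_A hnA)) sat_B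
    · obtain ⟨memA, mem_negB⟩ := hΓ.mem_and_neg_mem_of_neg_imp h
      exact Classical.not_imp.2 ⟨sat_A memA, not_sat_B mem_negB⟩
  | box t A ih =>
    have hAD : Subf A D := .trans (.box (.refl _)) hA
    have cssub_A : CSSub cs R A := .inl ⟨D, hD, hAD⟩
    have occ_t : OccRoot R t := ⟨D, hD, .of_subf (.boxT (.refl _)) hA⟩
    refine ⟨fun h => mem_factiveModel_ev.2 ?_, fun h hev => ?_⟩
    · have hpos : Node.pos t A ∈ Γ := hΓ.mem_of_ruleApp (.te h)
      exact ⟨.base ⟨hpos, cssub_A⟩, fun hT => (ih hAD).1 (hΓ.mem_of_ruleApp (.ruleT hT hpos))⟩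
    · exact hΓ.ev_neg_notMem (hΓ.pos_mem_of_evClosure hev.1 occ_t cssub_A)
        (hΓ.mem_of_ruleApp (.fe h))

end IsHintikka

theorem exists_isModel_of_not_tab (hB : L.hasB = false) (h5 : L.has5 = false)
    (hDT : L.hasD = true → L.hasT = true) (h : ¬ Tab L cs true cut R (Node.fml '' R)) :
    ∃ M, IsModel L cs M ∧ ∀ A ∈ R, M.sat A := by
  obtain ⟨Γ, hRΓ, hmax⟩ := exists_maximal_not_tab h
  have hΓ : IsHintikka L cs R Γ := isHintikka_of_maximal_not_tab hmax
  exact ⟨branchModel cs R Γ, hΓ.isModel_branchModel hB h5 hDT, fun A hA =>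
    (hΓ.branchModel_truth hA (.refl A)).1 (hRΓ (Set.mem_image_of_mem _ hA))⟩

theorem LP_tableau_sound_complete_general (hB : L.hasB = false) (h5 : L.has5 = false)
    (hDT : L.hasD = true → L.hasT = true) (cs : ConstSpec L) (cut : Bool) (A : Fml) :
    TabProof L cs true cut A ↔ Valid L cs A := by
  refine ⟨fun ⟨n, hn⟩ M hM => ?_, fun hvalid => ?_⟩
  · by_contra hA
    exact hn.not_branchSat hM (by rintro _ rfl; exact hA)
  · by_contra hopen
    rw [TabProof, ← Set.image_singleton (f := Node.fml)] at hopen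
    obtain ⟨M, hM, hsat⟩ := exists_isModel_of_not_tab hB h5 hDT hopen
    exact hsat (.neg A) rfl (hvalid M hM)

end JLTab

/-- soundness and completeness of the analytic tableaux for the
logic of proofs LP = JT4: an LP-formula A has an LP^e_CS-tableau proof iff A is
LP_CS-valid. -/
theorem JLTab.LP_tableau_sound_complete (cs : ConstSpec Logic.LP) (A : Fml)
    (hA : FmlInLang Logic.LP A) :
    TabProof Logic.LP cs true false A ↔ Valid Logic.LP cs A :=
  LP_tableau_sound_complete_general rfl rfl (fun _ => rfl) cs false A
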